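/- There exists ε > 0 depending only on d such that the following holds for every prime p. Let μ be a symmetric probability measure on G = F_p^d ⋊ SL_d(F_p) with ‖L₀^θ(μ)‖ ≤ 1/2, and let A ⊆ G be a symmetric set such that μ^{*(l)}(A) ≥ |G|^{−ε} for some integer l ≥ ⌊2^{47} d² log p⌋ (natural logarithm). Then θ(Π₃A) = SL_d(F_p), i.e. every element of SL_d(F_p) is the linear part of some element of the triple product set of A. -/

import Mathlib

open scoped BigOperators Matrix

namespace Paper

abbrev V (p d : ℕ) : Type := Fin d → ZMod p
abbrev SL (p d : ℕ) : Type := Matrix.SpecialLinearGroup (Fin d) (ZMod p)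

/-- The group `F_p^d ⋊ SL_d(F_p)` with multiplication
`(v₁,θ₁)·(v₂,θ₂) = (v₁+θ₁v₂, θ₁θ₂)`. -/
def Aff (p d : ℕ) : Type := V p d × SL p d

namespace Aff

variable {p d : ℕ}

/-- the translation part `v(g)` -/
def vec (g : Aff p d) : V p d := g.1

/-- the linear part `θ(g)` -/
def lin (g : Aff p d) : SL p d := g.2

def mk (v : V p d) (θ : SL p d) : Aff p d := (v, θ)

instance : Mul (Aff p d) :=
  ⟨fun g h => (g.1 + (g.2 : Matrix (Fin d) (Fin d) (ZMod p)) *ᵥ h.1, g.2 * h.2)⟩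

instance : One (Aff p d) := ⟨((0 : V p d), (1 : SL p d))⟩

instance : Inv (Aff p d) :=
  ⟨fun g => (-(((g.2)⁻¹ : SL p d) : Matrix (Fin d) (Fin d) (ZMod p)) *ᵥ g.1, (g.2)⁻¹)⟩

lemma mul_def (g h : Aff p d) :
    g * h = (g.1 + (g.2 : Matrix (Fin d) (Fin d) (ZMod p)) *ᵥ h.1, g.2 * h.2) := rfl

instance : Group (Aff p d) where
  mul_assoc a b c := by
    refine Prod.ext ?_ ?_
    · show (a.1 + (a.2 : Matrix (Fin d) (Fin d) (ZMod p)) *ᵥ b.1) +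
        ((a.2 * b.2 : SL p d) : Matrix (Fin d) (Fin d) (ZMod p)) *ᵥ c.1 =
        a.1 + (a.2 : Matrix (Fin d) (Fin d) (ZMod p)) *ᵥ
          (b.1 + (b.2 : Matrix (Fin d) (Fin d) (ZMod p)) *ᵥ c.1)
      simp [Matrix.mulVec_add, Matrix.mulVec_mulVec, add_assoc]
    · show a.2 * b.2 * c.2 = a.2 * (b.2 * c.2)
      exact mul_assoc _ _ _
  one_mul a := by
    refine Prod.ext ?_ ?_
    · show (0 : V p d) + ((1 : SL p d) : Matrix (Fin d) (Fin d) (ZMod p)) *ᵥ a.1 = a.1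
      simp
    · show (1 : SL p d) * a.2 = a.2
      exact one_mul _
  mul_one a := by
    refine Prod.ext ?_ ?_
    · show a.1 + (a.2 : Matrix (Fin d) (Fin d) (ZMod p)) *ᵥ (0 : V p d) = a.1
      simp
    · show a.2 * 1 = a.2
      exact mul_one _
  inv_mul_cancel a := by
    refine Prod.ext ?_ ?_
    · show -(((a.2)⁻¹ : SL p d) : Matrix (Fin d) (Fin d) (ZMod p)) *ᵥ a.1 +
        (((a.2)⁻¹ : SL p d) : Matrix (Fin d) (Fin d) (ZMod p)) *ᵥ a.1 = (0 : V p d)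
      rw [Matrix.neg_mulVec]
      exact neg_add_cancel _
    · show (a.2)⁻¹ * a.2 = 1
      exact inv_mul_cancel _

instance : DecidableEq (SL p d) :=
  inferInstanceAs (DecidableEq {A : Matrix (Fin d) (Fin d) (ZMod p) // A.det = 1})

instance : DecidableEq (Aff p d) := inferInstanceAs (DecidableEq (V p d × SL p d))

instance [NeZero p] : Fintype (Aff p d) := inferInstanceAs (Fintype (V p d × SL p d))

/-- the action of `Aff p d` on `F_p^d`: `g.x = v(g) + θ(g) x`. -/
def aact (g : Aff p d) (x : V p d) : V p d :=
  g.vec + (g.lin : Matrix (Fin d) (Fin d) (ZMod p)) *ᵥ x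

end Aff

/-- Dirac measure at a point -/
def dirac {β : Type*} [DecidableEq β] (x : β) : β → ℝ := fun y => if y = x then 1 else 0

/-- probability measure (density w.r.t. counting measure) on a finite set -/
def IsProb {β : Type*} [Fintype β] (μ : β → ℝ) : Prop :=
  (∀ x, 0 ≤ μ x) ∧ ∑ x, μ x = 1

/-- convolution of measures on a finite group -/
def conv {H : Type*} [Group H] [Fintype H] (μ ν : H → ℝ) : H → ℝ :=
  fun g => ∑ h, μ h * ν (h⁻¹ * g)

/-- `l`-fold convolution `μ^{*(l)}` -/
def itconv {H : Type*} [Group H] [Fintype H] [DecidableEq H] (μ : H → ℝ) : ℕ → H → ℝ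
  | 0 => dirac 1
  | n + 1 => conv (itconv μ n) μ

/-- `μ̌(g) = μ(g⁻¹)` -/
def check {H : Type*} [Group H] (μ : H → ℝ) : H → ℝ := fun g => μ g⁻¹

/-- the uniform probability measure on a finite subset -/
noncomputable def unif {H : Type*} [DecidableEq H] (S : Finset H) : H → ℝ :=
  fun g => if g ∈ S then ((S.card : ℝ))⁻¹ else 0

/-- `L²` norm (counting measure) of a complex-valued function on a finite set -/
noncomputable def cnorm2 {β : Type*} [Fintype β] (f : β → ℂ) : ℝ :=
  Real.sqrt (∑ x, ‖f x‖ ^ 2)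

/-- the averaging operator `L(μ)` on `ℂ[H]` -/
noncomputable def avgOp {H : Type*} [Group H] [Fintype H] (μ : H → ℝ) (f : H → ℂ) : H → ℂ :=
  fun g => ∑ s, (μ s : ℂ) * f (s⁻¹ * g)

/-- `‖L₀(μ)‖`: the operator norm, w.r.t. the `L²` norm for counting measure, of the
averaging operator `L(μ)` restricted to the functions with zero sum -/
noncomputable def L0norm {H : Type*} [Group H] [Fintype H] (μ : H → ℝ) : ℝ :=
  sSup {r : ℝ | ∃ f : H → ℂ, (∑ g, f g) = 0 ∧ cnorm2 f ≤ 1 ∧ r = cnorm2 (avgOp μ f)}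

/-- `L²` norm (counting measure) of a real-valued function on a finite set -/
noncomputable def norm2V {β : Type*} [Fintype β] (η : β → ℝ) : ℝ :=
  Real.sqrt (∑ x, (η x) ^ 2)

variable {p d : ℕ}

/-- the convolution `μ.ν` of a measure on `Aff p d` with a measure on `F_p^d`:
`(μ.ν)(x) = ∑_g μ(g)·ν(g⁻¹.x)` -/
def actConv [NeZero p] (μ : Aff p d → ℝ) (ν : V p d → ℝ) : V p d → ℝ :=
  fun x => ∑ g : Aff p d, μ g * ν (Aff.aact g⁻¹ x)

/-- pushforward of a measure on `Aff p d` under the projection `θ` to the linear part -/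
def push [NeZero p] (μ : Aff p d → ℝ) : SL p d → ℝ :=
  fun σ => ∑ g : Aff p d, if Aff.lin g = σ then μ g else 0

/-- `‖L₀^θ(μ)‖` -/
noncomputable def L0theta [NeZero p] (μ : Aff p d → ℝ) : ℝ := L0norm (push μ)

/-- the pairing `⟨x,ξ⟩` in `F_p` -/
def ip (x ξ : V p d) : ZMod p := ∑ i, x i * ξ i

/-- `e(t) = e^{-2πit/p}` -/
noncomputable def ee (p : ℕ) (t : ZMod p) : ℂ :=
  Complex.exp (-(2 * Real.pi * Complex.I) * (t.val : ℂ) / (p : ℂ))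

/-- the Fourier transform on `F_p^d` -/
noncomputable def fourier [NeZero p] (f : V p d → ℂ) (ξ : V p d) : ℂ :=
  ∑ x, ee p (ip x ξ) * f x

/-- the normalized `L̂⁴` norm on the Fourier side -/
noncomputable def hatNorm4 [NeZero p] (φ : V p d → ℂ) : ℝ :=
  (((p : ℝ) ^ d)⁻¹ * ∑ ξ, ‖φ ξ‖ ^ 4) ^ ((1 : ℝ) / 4)

section Generation
open Matrix

variable {n F : Type*} [DecidableEq n] [Fintype n] [Field F]

theorem specialLinearGroup_ext {A B : SpecialLinearGroup n F}
    (h : (A : Matrix n n F) = (B : Matrix n n F)) : A = B :=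
  Subtype.ext h

/-- The diagonal matrix with entries `D`, as an element of the special linear group. -/
def diagSL (D : n → F) (hD : ∏ k, D k = 1) : SpecialLinearGroup n F :=
  ⟨diagonal D, by rw [det_diagonal, hD]⟩

theorem coe_diagSL (D : n → F) (hD : ∏ k, D k = 1) :
    (diagSL D hD : Matrix n n F) = diagonal D := rfl

/-- The diagonal matrix with entries `a` at `i`, `a⁻¹` at `j` and `1` elsewhere. -/
def diagPair (i j : n) (a : F) (ha : a ≠ 0) : SpecialLinearGroup n F :=
  diagSL (Pi.mulSingle i a * Pi.mulSingle j a⁻¹) (by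
    simp only [Pi.mul_apply, Finset.prod_mul_distrib]
    simp [ha])

theorem coe_diagPair (i j : n) (a : F) (ha : a ≠ 0) :
    (diagPair i j a ha : Matrix n n F) = diagonal (Pi.mulSingle i a * Pi.mulSingle j a⁻¹) := rfl

theorem diagPair_eq {i j : n} (hij : i ≠ j) (a : F) (ha : a ≠ 0) :
    diagPair i j a ha =
      SpecialLinearGroup.transvection hij a * SpecialLinearGroup.transvection hij.symm (-a⁻¹) *
        SpecialLinearGroup.transvection hij (a - 1) * SpecialLinearGroup.transvection hij.symm 1 *
        SpecialLinearGroup.transvection hij (-1) := by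
  have key (k l : n) (hkl : k ≠ l) (c : F) (v : n → F) :
      (SpecialLinearGroup.transvection hkl c : Matrix n n F) *ᵥ v =
        Function.update v k (v k + c * v l) := by
    ext m
    by_cases h : m = k <;>
      simp [SpecialLinearGroup.transvection_coe, add_mulVec, single_mulVec, h]
  refine specialLinearGroup_ext ?_
  simp only [Matrix.SpecialLinearGroup.coe_mul]
  refine ext_of_mulVec_single fun m => ?_
  simp only [← mulVec_mulVec, key, coe_diagPair]
  generalize (Pi.single m 1 : n → F) = v
  ext k
  by_cases hi : k = i
  · subst hi
    simp [mulVec_diagonal, hij, hij.symm]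
    field_simp
    ring
  · by_cases hj : k = j
    · subst hj
      simp [mulVec_diagonal, hi, hij]
      field_simp
      ring
    · simp [mulVec_diagonal, hi, hj]

theorem diagPair_conj_transvection {i j : n} (hij : i ≠ j) (a c : F) (ha : a ≠ 0) :
    diagPair i j a ha * SpecialLinearGroup.transvection hij c =
      SpecialLinearGroup.transvection hij (a ^ 2 * c) * diagPair i j a ha := by
  refine specialLinearGroup_ext ?_
  simp only [Matrix.SpecialLinearGroup.coe_mul]
  ext k l
  simp only [coe_diagPair, SpecialLinearGroup.transvection_coe,
    mul_add, add_mul, Matrix.add_apply, diagonal_mul, mul_diagonal, single_apply]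
  by_cases hkl : k = l
  · subst hkl
    by_cases hk : i = k
    · subst hk
      simp [hij.symm]
    · simp [hk]
  by_cases hk : i = k
  · by_cases hl : j = l
    · subst hk hl
      simp [hij, hij.symm]
      field_simp
    · simp [hl, hkl]
  · simp [hk, hkl]

theorem eq_top_of_transvection_mem (N : Subgroup (SpecialLinearGroup n F))
    (hN : ∀ (i j : n) (hij : i ≠ j) (c : F), SpecialLinearGroup.transvection hij c ∈ N) :
    N = ⊤ := by
  have hpair {i j : n} (hij : i ≠ j) (a : F) (ha : a ≠ 0) : diagPair i j a ha ∈ N := by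
    rw [diagPair_eq hij]
    exact N.mul_mem (N.mul_mem (N.mul_mem (N.mul_mem (hN ..) (hN ..)) (hN ..)) (hN ..)) (hN ..)
  have hdiag (s : Finset n) : ∀ (D : n → F) (_ : ∀ k ∉ s, D k = 1) (hD : ∏ k, D k = 1),
      diagSL D hD ∈ N := by
    induction s using Finset.induction_on with
    | empty =>
      intro D h hD
      have : D = 1 := funext fun k => h k (by simp)
      subst this
      convert N.one_mem
      exact specialLinearGroup_ext (by simp [coe_diagSL])
    | insert i s his ih =>
      intro D h hD
      by_cases hi : D i = 1
      · refine ih D (fun k hk => ?_) hD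
        by_cases hki : k = i
        · rw [hki, hi]
        · exact h k (by simp [hki, hk])
      have hne (k : n) : D k ≠ 0 := fun h0 =>
        zero_ne_one (α := F) (by rw [← hD, Finset.prod_eq_zero (Finset.mem_univ k) h0])
      obtain ⟨j, hji, hj⟩ : ∃ j, j ≠ i ∧ D j ≠ 1 := by
        by_contra! hcon
        rw [Fintype.prod_eq_single i hcon] at hD
        exact hi hD
      have hjs : j ∈ s := by
        by_contra hjs
        exact hj (h j (by simp [hji, hjs]))
      have hmul : (diagPair i j (D i) (hne i))⁻¹ * diagSL D hD ∈ N := by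
        have hD' : ∏ k, (D * (Pi.mulSingle i (D i)⁻¹ * Pi.mulSingle j (D i)) : n → F) k = 1 := by
          simp only [Pi.mul_apply, Finset.prod_mul_distrib]
          simp [hD, hne i]
        convert ih (D * (Pi.mulSingle i (D i)⁻¹ * Pi.mulSingle j (D i))) ?_ hD'
        · rw [inv_mul_eq_iff_eq_mul]
          refine specialLinearGroup_ext ?_
          simp only [coe_diagPair, coe_diagSL, Matrix.SpecialLinearGroup.coe_mul,
            diagonal_mul_diagonal]
          congr 1
          ext k
          by_cases hki : k = i
          · subst hki
            simp [hji.symm]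
            field_simp [hne k]
          · by_cases hkj : k = j
            · subst hkj
              simp [hji]
              field_simp [hne i]
            · simp [hki, hkj]
        · intro k hk
          have hkj : k ≠ j := fun e => hk (e ▸ hjs)
          by_cases hki : k = i
          · subst hki
            simp [hkj, hne k]
          · simp [hki, hkj, h k (by simp [hki, hk])]
      simpa using N.mul_mem (hpair hji.symm (D i) (hne i)) hmul
  refine (Subgroup.eq_top_iff' N).2 fun g => ?_
  obtain ⟨L, L', D, h⟩ := Pivot.exists_list_transvec_mul_diagonal_mul_list_transvec g.1
  have hD : ∏ k, D k = 1 := by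
    have := congrArg det h
    rw [det_mul, det_mul] at this
    simpa [TransvectionStruct.det_toMatrix_prod] using this.symm
  have hlist (L : List (TransvectionStruct n F)) :
      (L.map TransvectionStruct.toSpecialLinearGroup).prod ∈ N :=
    N.list_prod_mem (by
      intro x hx
      obtain ⟨t, -, rfl⟩ := List.mem_map.1 hx
      exact hN t.i t.j t.hij t.c)
  have hcoe (L : List (TransvectionStruct n F)) :
      ((L.map TransvectionStruct.toSpecialLinearGroup).prod : Matrix n n F) =
        (L.map TransvectionStruct.toMatrix).prod := by
    induction L with
    | nil => simp
    | cons t L ih => simp [ih]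
  have : g = (L.map TransvectionStruct.toSpecialLinearGroup).prod * diagSL D hD *
      (L'.map TransvectionStruct.toSpecialLinearGroup).prod :=
    specialLinearGroup_ext (by simpa [hcoe, coe_diagSL] using h)
  rw [this]
  exact N.mul_mem (N.mul_mem (hlist L) (hdiag Finset.univ D (by simp) hD)) (hlist L')

end Generation

section Representation

open Module

/-- If a linear operator `T ≠ 1` satisfies `T ^ p = 1`, then it has a primitive `p`-th root of unity
as an eigenvalue. -/
theorem exists_hasEigenvector_of_pow_prime_eq_one {V : Type*} [AddCommGroup V] [Module ℂ V]
    [FiniteDimensional ℂ V] {p : ℕ} (hp : p.Prime) {T : End ℂ V} (hT : T ^ p = 1) (hT1 : T ≠ 1) :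
    ∃ (c : ℂ) (w : V), IsPrimitiveRoot c p ∧ T.HasEigenvector c w := by
  have hinv : ∀ x ∈ LinearMap.range (T - 1), T x ∈ LinearMap.range (T - 1) := by
    rintro _ ⟨y, rfl⟩
    exact ⟨T y, by simp⟩
  have hnt : Nontrivial (LinearMap.range (T - 1)) := by
    rw [Submodule.nontrivial_iff_ne_bot, Ne, LinearMap.range_eq_bot, sub_eq_zero]
    exact hT1
  obtain ⟨c, hc⟩ := End.exists_eigenvalue (T.restrict hinv)
  obtain ⟨⟨w, hwr⟩, hw⟩ := hc.exists_hasEigenvector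
  have hTw : T w = c • w := congrArg Subtype.val hw.apply_eq_smul
  have hw0 : w ≠ 0 := fun h => hw.2 (Subtype.ext h)
  have hTpow (k : ℕ) : (T ^ k) w = c ^ k • w := by
    induction k with
    | zero => simp
    | succ k ih => rw [pow_succ', End.mul_apply, ih, map_smul, hTw, smul_smul, pow_succ]
  have hcp : c ^ p = 1 := by
    have h := hTpow p
    rw [hT, End.one_apply] at h
    by_contra hne
    have : (c ^ p - 1) • w = 0 := by rw [sub_smul, ← h, one_smul, sub_self]
    exact (smul_eq_zero.1 this).elim (fun h => hne (sub_eq_zero.1 h)) hw0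
  have hc1 : c ≠ 1 := by
    rintro rfl
    obtain ⟨y, rfl⟩ := hwr
    have hgeom : (∑ k ∈ Finset.range p, T ^ k) ((T - 1) y) = 0 := by
      rw [← End.mul_apply, geom_sum_mul, hT, sub_self, LinearMap.zero_apply]
    rw [LinearMap.sum_apply, Finset.sum_congr rfl fun k _ => hTpow k] at hgeom
    simp only [one_pow, one_smul, Finset.sum_const, Finset.card_range] at hgeom
    rw [← Nat.cast_smul_eq_nsmul ℂ, smul_eq_zero] at hgeom
    exact hgeom.elim (fun h => hp.ne_zero (by exact_mod_cast h)) hw0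
  have : Fact p.Prime := ⟨hp⟩
  exact ⟨c, w, IsPrimitiveRoot.iff_orderOf.2 (orderOf_eq_prime hcp hc1),
    End.hasEigenvector_iff.2 ⟨End.mem_eigenspace_iff.2 hTw, hw0⟩⟩

/-- Nontrivial complex representations of `SL_n(F_p)` have dimension at least `(p - 1) / 2`. -/
theorem le_finrank_of_representation {n : Type*} [Fintype n] [DecidableEq n] {p : ℕ}
    [Fact p.Prime] {V : Type*} [AddCommGroup V] [Module ℂ V] [FiniteDimensional ℂ V]
    (ρ : Matrix.SpecialLinearGroup n (ZMod p) →* End ℂ V) (hρ : ρ ≠ 1) :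
    (p - 1) / 2 ≤ finrank ℂ V := by
  have hp : p.Prime := Fact.out
  obtain ⟨i, j, hij, c, hc⟩ : ∃ (i j : n) (hij : i ≠ j) (c : ZMod p),
      ρ (Matrix.SpecialLinearGroup.transvection hij c) ≠ 1 := by
    by_contra! hcon
    refine hρ (MonoidHom.ext fun g => ?_)
    have : g ∈ ρ.ker := by
      rw [eq_top_of_transvection_mem ρ.ker fun i j hij c => hcon i j hij c]
      trivial
    exact this
  set u := Matrix.SpecialLinearGroup.transvection hij c with hu
  have hpow (k : ℕ) : u ^ k = Matrix.SpecialLinearGroup.transvection hij ((k : ZMod p) * c) := by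
    induction k with
    | zero => simp
    | succ k ih =>
      rw [pow_succ, ih, hu, ← Matrix.SpecialLinearGroup.transvection_add]
      push_cast
      ring_nf
  obtain ⟨ζ, w, hζ, hw⟩ := exists_hasEigenvector_of_pow_prime_eq_one hp (T := ρ u)
    (by rw [← map_pow, hpow]; simp) hc
  have hcast (k : Fin ((p - 1) / 2)) : ((k + 1 : ℕ) : ZMod p) ≠ 0 := by
    rw [Ne, ZMod.natCast_eq_zero_iff]
    intro h
    have := Nat.le_of_dvd (Nat.succ_pos _) h
    omega
  have heig (k : Fin ((p - 1) / 2)) : (ρ u).HasEigenvector (ζ ^ ((k + 1 : ℕ) ^ 2))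
      (ρ (diagPair i j _ (hcast k))⁻¹ w) := by
    set h := diagPair i j _ (hcast k)
    have hconj : u * h⁻¹ = h⁻¹ * u ^ ((k + 1 : ℕ) ^ 2) := by
      rw [eq_inv_mul_iff_mul_eq, ← mul_assoc, mul_inv_eq_iff_eq_mul, hpow, hu,
        diagPair_conj_transvection hij, Nat.cast_pow]
    refine End.hasEigenvector_iff.2 ⟨End.mem_eigenspace_iff.2 ?_, fun h0 => hw.2 ?_⟩
    · rw [← End.mul_apply, ← map_mul, hconj, map_mul, End.mul_apply, map_pow, hw.pow_apply,
        map_smul]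
    · have := congrArg (ρ h) h0
      rwa [← End.mul_apply, ← map_mul, mul_inv_cancel, map_one, map_zero] at this
  have hinj : Function.Injective fun k : Fin ((p - 1) / 2) => ζ ^ ((k + 1 : ℕ) ^ 2) := by
    intro k l hkl
    have h1 : ((((k + 1 : ℕ) ^ 2 : ℕ) : ZMod p)) = (((l + 1 : ℕ) ^ 2 : ℕ) : ZMod p) := by
      have hmod := (hζ.isOfFinOrder hp.ne_zero).pow_eq_pow_iff_modEq.1 hkl
      rw [← hζ.eq_orderOf] at hmod
      exact (ZMod.natCast_eq_natCast_iff _ _ _).2 hmod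
    push_cast at h1
    have hk := k.2
    have hl := l.2
    rcases sq_eq_sq_iff_eq_or_eq_neg.1 h1 with h2 | h2
    · have h3 : ((k + 1 : ℕ) : ZMod p) = ((l + 1 : ℕ) : ZMod p) := by exact_mod_cast h2
      rw [ZMod.natCast_eq_natCast_iff] at h3
      have := Nat.ModEq.eq_of_lt_of_lt h3 (by omega) (by omega)
      exact Fin.ext (by omega)
    · exfalso
      have h3 : ((k + 1 + (l + 1) : ℕ) : ZMod p) = 0 := by
        push_cast
        rw [h2]
        ring
      rw [ZMod.natCast_eq_zero_iff] at h3
      have := Nat.le_of_dvd (by omega) h3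
      omega
  simpa using (End.eigenvectors_linearIndependent' (ρ u) _ hinj _ heig).fintype_card_le_finrank

end Representation

section QuasirandomGroups

open Module
open scoped InnerProductSpace

/-- The largest eigenvalue of `L ^ 2`, for a symmetric operator `L` preserving a nonzero
subspace `S`. -/
theorem exists_eigenvector_norm_sq_le {E : Type*} [NormedAddCommGroup E] [InnerProductSpace ℂ E]
    [FiniteDimensional ℂ E] {L : E →ₗ[ℂ] E} (hL : L.IsSymmetric) {S : Submodule ℂ E}
    (hS : ∀ f ∈ S, L f ∈ S) (hS0 : S ≠ ⊥) :
    ∃ c : ℝ, (∃ f ∈ S, f ≠ 0 ∧ L (L f) = (c : ℂ) • f) ∧ ∀ f ∈ S, ‖L f‖ ^ 2 ≤ c * ‖f‖ ^ 2 := by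
  have : Nontrivial S := Submodule.nontrivial_iff_ne_bot.2 hS0
  set T : S →ₗ[ℂ] S := L.restrict hS ∘ₗ L.restrict hS with hTdef
  have hre (f : S) : RCLike.re ⟪T f, f⟫_ℂ = ‖L f‖ ^ 2 := by
    have : ⟪T f, f⟫_ℂ = ⟪L f, L f⟫_ℂ := hL (L f) f
    rw [this, inner_self_eq_norm_sq]
  have hT : T.IsSymmetric := fun f g => by
    change ⟪L (L f), (g : E)⟫_ℂ = ⟪(f : E), L (L g)⟫_ℂ
    rw [hL, hL]
  have hbdd : BddAbove (Set.range fun x : {x : S // x ≠ 0} =>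
      RCLike.re ⟪T x, x⟫_ℂ / ‖(x : S)‖ ^ 2) := by
    refine ⟨‖LinearMap.toContinuousLinearMap T‖, ?_⟩
    rintro _ ⟨x, rfl⟩
    exact (le_abs_self _).trans
      ((LinearMap.toContinuousLinearMap T).rayleighQuotient_le_norm (x : S))
  obtain ⟨f, hf⟩ := hT.hasEigenvalue_iSup_of_finiteDimensional.exists_hasEigenvector
  refine ⟨_, ⟨f, f.2, fun h => hf.2 (Subtype.ext h), congrArg Subtype.val hf.apply_eq_smul⟩,
    fun g hg => ?_⟩
  rcases eq_or_ne g 0 with rfl | hg0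
  · simp
  have hpos : 0 < ‖g‖ ^ 2 := by positivity
  rw [← div_le_iff₀ hpos]
  have := le_ciSup hbdd ⟨⟨g, hg⟩, fun h => hg0 (congrArg Subtype.val h)⟩
  rwa [hre] at this

variable {H : Type*} [Group H]

/-- The right regular representation. -/
def rightRegular : H →* End ℂ (EuclideanSpace ℂ H) where
  toFun g :=
    { toFun f := WithLp.toLp 2 fun x => f (x * g)
      map_add' _ _ := rfl
      map_smul' _ _ := rfl }
  map_one' := by ext f x; simp
  map_mul' g h := by
    ext f x
    change f (x * (g * h)) = f (x * g * h)
    rw [mul_assoc]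

theorem rightRegular_apply (g : H) (f : EuclideanSpace ℂ H) (x : H) :
    rightRegular g f x = f (x * g) := rfl

/-- Left convolution with the indicator function of `B`. -/
def leftSum (B : Finset H) : End ℂ (EuclideanSpace ℂ H) where
  toFun f := WithLp.toLp 2 fun x => ∑ s ∈ B, f (s⁻¹ * x)
  map_add' f g := by ext x; simp [Finset.sum_add_distrib]
  map_smul' c f := by ext x; simp [Finset.mul_sum]

theorem leftSum_apply (B : Finset H) (f : EuclideanSpace ℂ H) (x : H) :
    leftSum B f x = ∑ s ∈ B, f (s⁻¹ * x) := rfl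

theorem leftSum_rightRegular (B : Finset H) (g : H) (f : EuclideanSpace ℂ H) :
    leftSum B (rightRegular g f) = rightRegular g (leftSum B f) := by
  ext x
  simp [leftSum_apply, rightRegular_apply, mul_assoc]

theorem leftSum_isSymmetric [Fintype H] {B : Finset H} (hB : ∀ b ∈ B, b⁻¹ ∈ B) :
    (leftSum B).IsSymmetric := by
  intro f g
  simp only [PiLp.inner_apply, leftSum_apply, RCLike.inner_apply, map_sum, Finset.mul_sum,
    Finset.sum_mul]
  rw [Finset.sum_comm, Finset.sum_comm (s := Finset.univ)]
  refine Finset.sum_bij' (fun s _ => s⁻¹) (fun s _ => s⁻¹) hB hB (by simp) (by simp) fun s _ => ?_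
  refine Fintype.sum_equiv (Equiv.mulLeft s⁻¹) _ _ fun x => ?_
  simp

/-- The functions with zero sum. -/
def zeroSum (H : Type*) [Fintype H] : Submodule ℂ (EuclideanSpace ℂ H) where
  carrier := {f | ∑ x, f x = 0}
  add_mem' {f g} hf hg := by
    change ∑ x, (f x + g x) = 0
    rw [Finset.sum_add_distrib, show ∑ x, f x = 0 from hf, show ∑ x, g x = 0 from hg, add_zero]
  zero_mem' := by simp
  smul_mem' c f hf := by
    change ∑ x, c • f x = 0
    rw [← Finset.smul_sum, show ∑ x, f x = 0 from hf, smul_zero]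

theorem mem_zeroSum {H : Type*} [Fintype H] {f : EuclideanSpace ℂ H} :
    f ∈ zeroSum H ↔ ∑ x, f x = 0 := Iff.rfl

variable [Fintype H]

theorem leftSum_mem_zeroSum (B : Finset H) {f : EuclideanSpace ℂ H} (hf : f ∈ zeroSum H) :
    leftSum B f ∈ zeroSum H := by
  rw [mem_zeroSum] at *
  simp only [leftSum_apply]
  rw [Finset.sum_comm]
  refine Finset.sum_eq_zero fun s _ => ?_
  rw [← hf]
  exact Fintype.sum_equiv (Equiv.mulLeft s⁻¹) _ _ fun x => rfl

theorem rightRegular_mem_zeroSum (g : H) {f : EuclideanSpace ℂ H} (hf : f ∈ zeroSum H) :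
    rightRegular g f ∈ zeroSum H := by
  rw [mem_zeroSum] at *
  rw [← hf]
  exact Fintype.sum_equiv (Equiv.mulRight g) _ _ fun x => rfl

/-- The Hilbert-Schmidt norm of `leftSum B` bounds its norm on orthonormal families. -/
theorem sum_norm_sq_leftSum_le [DecidableEq H] (B : Finset H) {ι : Type*} [Fintype ι]
    {v : ι → EuclideanSpace ℂ H} (hv : Orthonormal ℂ v) :
    ∑ i, ‖leftSum B (v i)‖ ^ 2 ≤ (Fintype.card H : ℝ) * B.card := by
  let row (x : H) : EuclideanSpace ℂ H := WithLp.toLp 2 fun y => if x * y⁻¹ ∈ B then 1 else 0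
  have hsum {M : Type} [AddCommMonoid M] (x : H) (F : H → M) :
      ∑ y, (if x * y⁻¹ ∈ B then F y else 0) = ∑ s ∈ B, F (s⁻¹ * x) := by
    rw [← Finset.sum_filter]
    refine Finset.sum_bij' (fun y _ => x * y⁻¹) (fun s _ => s⁻¹ * x) ?_ ?_ ?_ ?_ ?_ <;> simp
  have hrow (x : H) (f : EuclideanSpace ℂ H) : ‖leftSum B f x‖ = ‖⟪f, row x⟫_ℂ‖ := by
    rw [← inner_conj_symm, RCLike.norm_conj]
    congr 1
    rw [leftSum_apply, ← hsum]
    simp [row, PiLp.inner_apply]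
  have hrownorm (x : H) : ‖row x‖ ^ 2 = B.card := by
    rw [EuclideanSpace.norm_sq_eq, ← nsmul_one, ← Finset.sum_const, ← hsum x fun _ => (1 : ℝ)]
    refine Finset.sum_congr rfl fun y _ => ?_
    by_cases h : x * y⁻¹ ∈ B <;> simp [row, h]
  simp_rw [EuclideanSpace.norm_sq_eq, hrow]
  rw [Finset.sum_comm]
  calc ∑ x, ∑ i, ‖⟪v i, row x⟫_ℂ‖ ^ 2 ≤ ∑ x, ‖row x‖ ^ 2 :=
        Finset.sum_le_sum fun x _ => hv.sum_inner_products_le (row x)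
    _ = _ := by simp [hrownorm]

/-- In a group all of whose nontrivial representations have dimension at least `D`, convolution
with a symmetric set has small norm on functions with zero sum. -/
theorem norm_sq_leftSum_le [DecidableEq H] {D : ℕ}
    (hD : ∀ (W : Submodule ℂ (EuclideanSpace ℂ H)) (ρ : H →* End ℂ W), ρ ≠ 1 → D ≤ finrank ℂ W)
    {B : Finset H} (hB : ∀ b ∈ B, b⁻¹ ∈ B) {f : EuclideanSpace ℂ H} (hf : f ∈ zeroSum H) :
    D * ‖leftSum B f‖ ^ 2 ≤ Fintype.card H * B.card * ‖f‖ ^ 2 := by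
  rcases eq_or_ne f 0 with rfl | hf0
  · simp
  obtain ⟨c, ⟨w, hw, hw0, hcw⟩, hc⟩ := exists_eigenvector_norm_sq_le (leftSum_isSymmetric hB)
    (fun f hf => leftSum_mem_zeroSum B hf) fun h => hf0 ((Submodule.mem_bot ℂ).1 (h ▸ hf))
  let W : Submodule ℂ (EuclideanSpace ℂ H) :=
    zeroSum H ⊓ End.eigenspace (leftSum B * leftSum B) (c : ℂ)
  have hmem (g : EuclideanSpace ℂ H) :
      g ∈ W ↔ g ∈ zeroSum H ∧ leftSum B (leftSum B g) = (c : ℂ) • g := by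
    simp [W]
  have hinv (h : H) : ∀ g ∈ W, rightRegular h g ∈ W := fun g hg => by
    rw [hmem] at *
    refine ⟨rightRegular_mem_zeroSum h hg.1, ?_⟩
    rw [leftSum_rightRegular, leftSum_rightRegular, hg.2, map_smul]
  let ρ : H →* End ℂ W :=
    { toFun h := (rightRegular h).restrict (hinv h)
      map_one' := by ext; simp
      map_mul' g h := by ext; simp }
  have hρ : ρ ≠ 1 := by
    intro h
    have hconst (x : H) : w x = w 1 := by
      have := congrArg (fun σ : H →* End ℂ W => ((σ x ⟨w, (hmem w).2 ⟨hw, hcw⟩⟩ : W) :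
        EuclideanSpace ℂ H) 1) h
      simpa [ρ, rightRegular_apply] using this
    have hsum := mem_zeroSum.1 hw
    simp only [hconst, Finset.sum_const, Finset.card_univ, nsmul_eq_mul, mul_eq_zero,
      Nat.cast_eq_zero, Fintype.card_ne_zero, false_or] at hsum
    exact hw0 (by ext x; simp [hconst x, hsum])
  have hdim := hD W ρ hρ
  let b := stdOrthonormalBasis ℂ W
  have hb : Orthonormal ℂ fun i => (b i : EuclideanSpace ℂ H) :=
    b.orthonormal.comp_linearIsometry W.subtypeₗᵢ
  have hnorm (i) : ‖leftSum B (b i : EuclideanSpace ℂ H)‖ ^ 2 = c := by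
    have h1 := leftSum_isSymmetric hB (leftSum B (b i : EuclideanSpace ℂ H)) (b i)
    rw [((hmem _).1 (b i).2).2, inner_smul_left, inner_self_eq_norm_sq_to_K,
      inner_self_eq_norm_sq_to_K, hb.1 i] at h1
    have h2 : (c : ℂ) = ((‖leftSum B (b i : EuclideanSpace ℂ H)‖ ^ 2 : ℝ) : ℂ) := by
      simpa using h1
    exact_mod_cast h2.symm
  have hHS := sum_norm_sq_leftSum_le B hb
  simp only [hnorm, Finset.sum_const, Finset.card_univ, Fintype.card_fin, nsmul_eq_mul] at hHS
  have hc0 : 0 ≤ c := by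
    have := (sq_nonneg _).trans (hc f hf)
    exact nonneg_of_mul_nonneg_left this (by positivity)
  calc D * ‖leftSum B f‖ ^ 2 ≤ D * (c * ‖f‖ ^ 2) := by gcongr; exact hc f hf
    _ ≤ finrank ℂ W * (c * ‖f‖ ^ 2) := by gcongr
    _ = finrank ℂ W * c * ‖f‖ ^ 2 := by ring
    _ ≤ _ := by gcongr

open scoped Pointwise

/-- The trick of Gowers: in a group all of whose nontrivial representations have dimension at least
`D`, a large symmetric set generates the group in three steps. -/
theorem pow_three_eq_univ_of_lt [DecidableEq H] {D : ℕ}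
    (hD : ∀ (W : Submodule ℂ (EuclideanSpace ℂ H)) (ρ : H →* End ℂ W), ρ ≠ 1 → D ≤ finrank ℂ W)
    {B : Finset H} (hB : ∀ b ∈ B, b⁻¹ ∈ B)
    (hcard : (Fintype.card H : ℝ) ^ 3 < D * (B.card : ℝ) ^ 3) : B ^ 3 = Finset.univ := by
  by_contra hne
  obtain ⟨x, hx⟩ : ∃ x, x ∉ B ^ 3 := by
    by_contra! h
    exact hne (Finset.eq_univ_iff_forall.2 h)
  set N : ℝ := (Fintype.card H : ℝ) with hN
  set b : ℝ := (B.card : ℝ) with hb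
  have hN0 : 0 < N := by simp [hN, Fintype.card_pos]
  have hb0 : 0 < b := by
    refine lt_of_le_of_ne (by positivity) fun h => ?_
    rw [← h] at hcard
    have : 0 < N ^ 3 := by positivity
    norm_num at hcard
    linarith
  let F : H → ℝ := fun y => (if y ∈ B then 1 else 0) - b / N
  let f : EuclideanSpace ℂ H := WithLp.toLp 2 fun y => (F y : ℂ)
  have hFsum : ∑ y, F y = 0 := by
    simp only [F, Finset.sum_sub_distrib, Finset.sum_ite_mem, Finset.univ_inter, Finset.sum_const,
      nsmul_eq_mul, mul_one, Finset.card_univ, ← hN, ← hb]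
    field_simp
    ring
  have hf : f ∈ zeroSum H := by
    rw [mem_zeroSum]
    change ∑ y, (F y : ℂ) = 0
    exact_mod_cast hFsum
  have hfnorm : ‖f‖ ^ 2 ≤ b := by
    have h1 : ‖f‖ ^ 2 = ∑ y, F y ^ 2 := by
      simp [EuclideanSpace.norm_sq_eq, f]
    have h2 (y : H) : F y ^ 2 = (if y ∈ B then 1 else 0) - b / N * F y
        - b / N * (if y ∈ B then 1 else 0) := by
      by_cases h : y ∈ B <;> simp only [F, h, if_true, if_false] <;> ring
    rw [h1, Finset.sum_congr rfl fun y _ => h2 y, Finset.sum_sub_distrib, Finset.sum_sub_distrib,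
      ← Finset.mul_sum, ← Finset.mul_sum, hFsum]
    simp only [Finset.sum_ite_mem, Finset.univ_inter, Finset.sum_const, nsmul_eq_mul, mul_one,
      mul_zero, sub_zero, ← hb]
    have : 0 ≤ b / N * b := by positivity
    linarith
  have hLf (c : H) (hc : c ∈ B) : leftSum B f (x * c) = ((-(b * (b / N)) : ℝ) : ℂ) := by
    have h1 (s : H) (hs : s ∈ B) : F (s⁻¹ * (x * c)) = -(b / N) := by
      have : s⁻¹ * (x * c) ∉ B := fun hmem => hx <| by
        have := Finset.mul_mem_mul (Finset.mul_mem_mul hs hmem) (hB c hc)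
        rw [pow_succ, sq]
        simpa [mul_assoc] using this
      simp [F, this]
    change ∑ s ∈ B, (F (s⁻¹ * (x * c)) : ℂ) = _
    rw [← Complex.ofReal_sum, Finset.sum_congr rfl h1, Finset.sum_const, nsmul_eq_mul,
      mul_neg]
  have hLfnorm : b * (b * (b / N)) ^ 2 ≤ ‖leftSum B f‖ ^ 2 := by
    rw [EuclideanSpace.norm_sq_eq]
    calc b * (b * (b / N)) ^ 2 = ∑ c ∈ B, ‖leftSum B f (x * c)‖ ^ 2 := by
          rw [Finset.sum_congr rfl fun c hc => by rw [hLf c hc, Complex.norm_real,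
            Real.norm_eq_abs, sq_abs, neg_sq], Finset.sum_const, nsmul_eq_mul]
      _ ≤ ∑ c, ‖leftSum B f (x * c)‖ ^ 2 :=
          Finset.sum_le_univ_sum_of_nonneg fun _ => by positivity
      _ = _ := Fintype.sum_equiv (Equiv.mulLeft x) _ _ fun _ => rfl
  have key := norm_sq_leftSum_le hD hB hf
  have h1 : D * (b * (b * (b / N)) ^ 2) ≤ N * b * b :=
    (mul_le_mul_of_nonneg_left hLfnorm (Nat.cast_nonneg D)).trans
      (key.trans (mul_le_mul_of_nonneg_left hfnorm (by positivity)))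
  have h2 : D * (b * (b * (b / N)) ^ 2) = D * b ^ 3 * (b ^ 2 / N ^ 2) := by
    field_simp
  have h3 : N * b * b = N ^ 3 * (b ^ 2 / N ^ 2) := by
    field_simp
  rw [h2, h3] at h1
  exact absurd (le_of_mul_le_mul_right h1 (by positivity)) (not_le.2 hcard)

/-- A symmetric set of more than half the elements of a group generates the group in three
steps. -/
theorem pow_three_eq_univ_of_half_lt [DecidableEq H] {B : Finset H} (hB : ∀ b ∈ B, b⁻¹ ∈ B)
    (hcard : Fintype.card H < 2 * B.card) : B ^ 3 = Finset.univ := by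
  have hmul (x : H) : x ∈ B * B := by
    have hcard' : (B.image fun c => x * c).card = B.card :=
      Finset.card_image_of_injective _ (mul_right_injective x)
    obtain ⟨y, hy⟩ := Finset.inter_nonempty_of_card_lt_card_add_card (Finset.subset_univ B)
      (Finset.subset_univ (B.image fun c => x * c)) (by rw [hcard', Finset.card_univ]; omega)
    rw [Finset.mem_inter, Finset.mem_image] at hy
    obtain ⟨hyB, c, hc, rfl⟩ := hy
    simpa using Finset.mul_mem_mul hyB (hB c hc)
  have hne : B.Nonempty := Finset.card_pos.1 (by omega)
  obtain ⟨c, hc⟩ := hne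
  refine Finset.eq_univ_iff_forall.2 fun x => ?_
  rw [pow_succ, sq]
  simpa using Finset.mul_mem_mul (hmul (x * c⁻¹)) hc

end QuasirandomGroups

section Convolution

variable {H : Type*} [Group H] [Fintype H]

theorem conv_assoc (μ ν η : H → ℝ) : conv (conv μ ν) η = conv μ (conv ν η) := by
  funext g
  simp only [conv, Finset.sum_mul, Finset.mul_sum]
  rw [Finset.sum_comm]
  refine Finset.sum_congr rfl fun h _ => ?_
  refine Fintype.sum_equiv (Equiv.mulLeft h⁻¹) _ _ fun k => ?_
  simp [mul_assoc]

theorem conv_dirac [DecidableEq H] (μ : H → ℝ) : conv μ (dirac 1) = μ := by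
  funext g
  simp [conv, dirac, inv_mul_eq_one]

theorem dirac_conv [DecidableEq H] (μ : H → ℝ) : conv (dirac 1) μ = μ := by
  funext g
  simp [conv, dirac]

theorem itconv_succ' [DecidableEq H] (μ : H → ℝ) (n : ℕ) :
    itconv μ (n + 1) = conv μ (itconv μ n) := by
  induction n with
  | zero => exact (dirac_conv μ).trans (conv_dirac μ).symm
  | succ n ih =>
    change conv (itconv μ (n + 1)) μ = conv μ (conv (itconv μ n) μ)
    rw [ih, conv_assoc]

theorem itconv_nonneg [DecidableEq H] {μ : H → ℝ} (hμ : ∀ x, 0 ≤ μ x) (n : ℕ) (x : H) :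
    0 ≤ itconv μ n x := by
  induction n generalizing x with
  | zero =>
    rw [itconv, dirac]
    split <;> norm_num
  | succ n ih => exact Finset.sum_nonneg fun h _ => mul_nonneg (ih h) (hμ _)

theorem cnorm2_nonneg {β : Type*} [Fintype β] (f : β → ℂ) : 0 ≤ cnorm2 f := Real.sqrt_nonneg _

theorem cnorm2_eq_norm {β : Type*} [Fintype β] (f : β → ℂ) :
    cnorm2 f = ‖(WithLp.toLp 2 f : EuclideanSpace ℂ β)‖ := by
  rw [EuclideanSpace.norm_eq]
  rfl

theorem norm_apply_le_cnorm2 {β : Type*} [Fintype β] (f : β → ℂ) (x : β) : ‖f x‖ ≤ cnorm2 f := by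
  rw [cnorm2_eq_norm]
  exact PiLp.norm_apply_le (WithLp.toLp 2 f : EuclideanSpace ℂ β) x

/-- The averaging operator as a linear map of the Euclidean space of functions. -/
noncomputable def avgOpLinear (μ : H → ℝ) :
    EuclideanSpace ℂ H →ₗ[ℂ] EuclideanSpace ℂ H where
  toFun f := WithLp.toLp 2 (avgOp μ f)
  map_add' f g := by ext x; simp [avgOp, mul_add, Finset.sum_add_distrib]
  map_smul' c f := by ext x; simp [avgOp, Finset.mul_sum, mul_left_comm]

theorem cnorm2_avgOp_le (μ : H → ℝ) {f : H → ℂ} (hf : ∑ x, f x = 0) :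
    cnorm2 (avgOp μ f) ≤ L0norm μ * cnorm2 f := by
  have hbdd : BddAbove {r : ℝ | ∃ f : H → ℂ, (∑ g, f g) = 0 ∧ cnorm2 f ≤ 1 ∧
      r = cnorm2 (avgOp μ f)} := by
    refine ⟨‖LinearMap.toContinuousLinearMap (avgOpLinear μ)‖, ?_⟩
    rintro _ ⟨g, -, hg, rfl⟩
    rw [cnorm2_eq_norm] at *
    exact (LinearMap.toContinuousLinearMap (avgOpLinear μ)).unit_le_opNorm _ hg
  rcases (cnorm2_nonneg f).eq_or_lt with h0 | hpos
  · have hf0 : (WithLp.toLp 2 f : EuclideanSpace ℂ H) = 0 := by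
      rw [← norm_eq_zero, ← cnorm2_eq_norm, ← h0]
    have : cnorm2 (avgOp μ f) = ‖avgOpLinear μ (WithLp.toLp 2 f)‖ := cnorm2_eq_norm _
    rw [this, hf0, map_zero, norm_zero, ← h0, mul_zero]
  · have hsmul (c : ℝ) (hc : 0 ≤ c) (g : H → ℂ) : cnorm2 ((c : ℂ) • g) = c * cnorm2 g := by
      rw [cnorm2_eq_norm, cnorm2_eq_norm, WithLp.toLp_smul, norm_smul, Complex.norm_real,
        Real.norm_of_nonneg hc]
    have hscale : avgOp μ (((cnorm2 f)⁻¹ : ℝ) • f : H → ℂ) =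
        (((cnorm2 f)⁻¹ : ℝ) : ℂ) • avgOp μ f := by
      funext x
      simp [avgOp, Finset.mul_sum, mul_left_comm]
    have hle : (cnorm2 f)⁻¹ * cnorm2 (avgOp μ f) ≤ L0norm μ := by
      refine le_csSup hbdd ⟨(((cnorm2 f)⁻¹ : ℝ) : ℂ) • f, ?_, ?_, ?_⟩
      · simp only [Pi.smul_apply, ← Finset.smul_sum, hf, smul_zero]
      · rw [hsmul _ (by positivity), inv_mul_cancel₀ hpos.ne']
      · rw [← hsmul _ (by positivity), ← hscale]
        rfl
    rwa [inv_mul_le_iff₀ hpos, mul_comm] at hle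

theorem sum_avgOp (μ : H → ℝ) (f : H → ℂ) :
    ∑ x, avgOp μ f x = (∑ s, (μ s : ℂ)) * ∑ x, f x := by
  simp only [avgOp]
  rw [Finset.sum_comm, Finset.sum_mul]
  refine Finset.sum_congr rfl fun s _ => ?_
  rw [← Finset.mul_sum]
  congr 1
  exact Fintype.sum_equiv (Equiv.mulLeft s⁻¹) _ _ fun x => rfl

/-- A spectral gap makes the convolution powers converge to the uniform measure. -/
theorem abs_itconv_sub_le [DecidableEq H] {μ : H → ℝ} (hμ : ∑ x, μ x = 1) {c : ℝ} (hc0 : 0 ≤ c)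
    (hc : L0norm μ ≤ c) (n : ℕ) (x : H) :
    |itconv μ n x - (Fintype.card H : ℝ)⁻¹| ≤ c ^ n := by
  let F (n : ℕ) : H → ℂ := fun x => ((itconv μ n x - (Fintype.card H : ℝ)⁻¹ : ℝ) : ℂ)
  have hcard : (Fintype.card H : ℝ) ≠ 0 := by simp
  have hF (n : ℕ) : F (n + 1) = avgOp μ (F n) := by
    funext x
    change ((itconv μ (n + 1) x - (Fintype.card H : ℝ)⁻¹ : ℝ) : ℂ) =
      ∑ s, (μ s : ℂ) * ((itconv μ n (s⁻¹ * x) - (Fintype.card H : ℝ)⁻¹ : ℝ) : ℂ)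
    norm_cast
    simp only [mul_sub, Finset.sum_sub_distrib, ← Finset.sum_mul, hμ, one_mul]
    rw [itconv_succ']
    rfl
  have hsum (n : ℕ) : ∑ x, F n x = 0 := by
    induction n with
    | zero =>
      change ∑ x : H, ((dirac 1 x - (Fintype.card H : ℝ)⁻¹ : ℝ) : ℂ) = 0
      norm_cast
      simp [dirac, Finset.sum_sub_distrib, hcard]
    | succ n ih => rw [hF, sum_avgOp, ih, mul_zero]
  have hnorm (n : ℕ) : cnorm2 (F n) ≤ c ^ n := by
    induction n with
    | zero =>
      rw [pow_zero, cnorm2, Real.sqrt_le_iff]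
      refine ⟨zero_le_one, ?_⟩
      have hsq (x : H) : ‖F 0 x‖ ^ 2 = dirac 1 x - (Fintype.card H : ℝ)⁻¹ * dirac 1 x
          - (Fintype.card H : ℝ)⁻¹ * (dirac 1 x - (Fintype.card H : ℝ)⁻¹) := by
        simp only [F, Complex.norm_real, Real.norm_eq_abs, sq_abs, itconv, dirac]
        split <;> ring
      rw [Finset.sum_congr rfl fun x _ => hsq x, Finset.sum_sub_distrib, Finset.sum_sub_distrib,
        ← Finset.mul_sum, ← Finset.mul_sum, Finset.sum_sub_distrib]
      simp [dirac, hcard]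
    | succ n ih =>
      rw [hF, pow_succ']
      refine (cnorm2_avgOp_le μ (hsum n)).trans ?_
      gcongr
      exact cnorm2_nonneg _
  have := (norm_apply_le_cnorm2 (F n) x).trans (hnorm n)
  rwa [Complex.norm_real] at this

end Convolution

section LinearPart

theorem lin_mul (g h : Aff p d) : (g * h).lin = g.lin * h.lin := rfl

theorem lin_inv (g : Aff p d) : (g⁻¹).lin = (g.lin)⁻¹ := rfl

open Pointwise in
theorem image_lin_pow (A : Finset (Aff p d)) (n : ℕ) :
    (A ^ n).image Aff.lin = (A.image Aff.lin) ^ n :=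
  Finset.image_pow (MonoidHom.mk' Aff.lin lin_mul) A n

variable [NeZero p]

theorem push_conv (μ ν : Aff p d → ℝ) : push (conv μ ν) = conv (push μ) (push ν) := by
  funext σ
  have hinner (h : Aff p d) : ∑ g : Aff p d, (if g.lin = σ then μ h * ν (h⁻¹ * g) else 0) =
      μ h * push ν (h.lin⁻¹ * σ) := by
    rw [push, Finset.mul_sum]
    refine Fintype.sum_equiv (Equiv.mulLeft h⁻¹) _ _ fun g => ?_
    simp [lin_mul, lin_inv]
  have hleft : push (conv μ ν) σ = ∑ h : Aff p d, μ h * push ν (h.lin⁻¹ * σ) := by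
    simp only [← hinner]
    rw [Finset.sum_comm, push]
    refine Finset.sum_congr rfl fun g _ => ?_
    split <;> simp [conv]
  have hpush (τ : SL p d) : push μ τ = ∑ g : Aff p d, if g.lin = τ then μ g else 0 := rfl
  rw [hleft, conv]
  simp only [hpush, Finset.sum_mul]
  rw [Finset.sum_comm]
  simp

theorem push_dirac_one : push (dirac (1 : Aff p d)) = dirac 1 := by
  funext σ
  have : push (dirac (1 : Aff p d)) σ = if (1 : Aff p d).lin = σ then 1 else 0 := by
    rw [push, Finset.sum_eq_single 1]
    · simp [dirac]
    · intro g _ hg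
      simp [dirac, hg]
    · simp
  rw [this, dirac]
  exact if_congr eq_comm rfl rfl

theorem push_itconv (μ : Aff p d → ℝ) (n : ℕ) : push (itconv μ n) = itconv (push μ) n := by
  induction n with
  | zero => exact push_dirac_one
  | succ n ih => rw [itconv, itconv, push_conv, ih]

theorem sum_push (μ : Aff p d → ℝ) : ∑ σ, push μ σ = ∑ g, μ g := by
  simp only [push]
  rw [Finset.sum_comm]
  simp

theorem sum_le_sum_push {μ : Aff p d → ℝ} (hμ : ∀ g, 0 ≤ μ g) (A : Finset (Aff p d)) :
    ∑ g ∈ A, μ g ≤ ∑ σ ∈ A.image Aff.lin, push μ σ := by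
  simp only [push]
  rw [Finset.sum_comm]
  calc ∑ g ∈ A, μ g = ∑ g ∈ A, ∑ σ ∈ A.image Aff.lin, (if g.lin = σ then μ g else 0) := by
        refine Finset.sum_congr rfl fun g hg => ?_
        rw [Finset.sum_ite_eq, if_pos (Finset.mem_image_of_mem _ hg)]
    _ ≤ _ := Finset.sum_le_univ_sum_of_nonneg fun g => Finset.sum_nonneg fun σ _ => by
        split
        · exact hμ g
        · exact le_rfl

theorem sum_itconv_le {μ : Aff p d → ℝ} (hμ : IsProb μ) (hgap : L0theta μ ≤ 1 / 2)
    (A : Finset (Aff p d)) (l : ℕ) :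
    ∑ g ∈ A, itconv μ l g ≤
      (A.image Aff.lin).card * ((Fintype.card (SL p d) : ℝ)⁻¹ + (1 / 2) ^ l) := by
  refine (sum_le_sum_push (itconv_nonneg hμ.1 l) A).trans ?_
  rw [push_itconv, ← nsmul_eq_mul]
  refine Finset.sum_le_card_nsmul _ _ _ fun σ _ => ?_
  have := abs_itconv_sub_le ((sum_push μ).trans hμ.2) (by norm_num) hgap l σ
  linarith [(abs_le.1 this).2]

end LinearPart

section Numerics

theorem card_specialLinearGroup_le [NeZero p] : Fintype.card (SL p d) ≤ p ^ d ^ 2 := by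
  calc Fintype.card (SL p d) ≤ Fintype.card (Matrix (Fin d) (Fin d) (ZMod p)) :=
        Fintype.card_le_of_injective _ Subtype.val_injective
    _ = p ^ d ^ 2 := by
      change Fintype.card (Fin d → Fin d → ZMod p) = _
      rw [Fintype.card_fun, Fintype.card_fun, Fintype.card_fin, ZMod.card, ← pow_mul, sq]

theorem card_aff_le [NeZero p] : Fintype.card (Aff p d) ≤ p ^ (2 * d ^ 2) := by
  have hcard : Fintype.card (Aff p d) = p ^ d * Fintype.card (SL p d) := by
    change Fintype.card (V p d × SL p d) = _
    rw [Fintype.card_prod, Fintype.card_fun, Fintype.card_fin, ZMod.card]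
  have hp : 1 ≤ p := NeZero.pos p
  rw [hcard, two_mul, pow_add]
  gcongr
  · exact Nat.le_self_pow two_ne_zero d
  · exact card_specialLinearGroup_le

/-- The threshold `1 / p` for the 32nd power of `|G| ^ (-ε)`, when `ε = 1 / (64 d ^ 2)`. -/
theorem one_le_card_aff_rpow_pow_mul [NeZero p] (hd : 0 < d) :
    1 ≤ ((Fintype.card (Aff p d) : ℝ) ^ (-(1 / (64 * (d : ℝ) ^ 2)))) ^ 32 * p := by
  have hp : (0 : ℝ) < p := by exact_mod_cast NeZero.pos p
  have hd' : (0 : ℝ) < d := by exact_mod_cast hd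
  have hG : (0 : ℝ) < Fintype.card (Aff p d) := by exact_mod_cast Fintype.card_pos
  have hle : (Fintype.card (Aff p d) : ℝ) ≤ (p : ℝ) ^ (2 * (d : ℝ) ^ 2) := by
    have := card_aff_le (p := p) (d := d)
    rw [show 2 * (d : ℝ) ^ 2 = ((2 * d ^ 2 : ℕ) : ℝ) by push_cast; rfl, Real.rpow_natCast]
    exact_mod_cast this
  calc (1 : ℝ) = ((p : ℝ) ^ (2 * (d : ℝ) ^ 2)) ^ (-(1 / (2 * (d : ℝ) ^ 2))) * p := by
        rw [← Real.rpow_mul hp.le, show 2 * (d : ℝ) ^ 2 * (-(1 / (2 * (d : ℝ) ^ 2))) = -1 by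
          field_simp, Real.rpow_neg_one, inv_mul_cancel₀ hp.ne']
    _ ≤ (Fintype.card (Aff p d) : ℝ) ^ (-(1 / (2 * (d : ℝ) ^ 2))) * p := by
        refine mul_le_mul_of_nonneg_right ?_ hp.le
        exact Real.rpow_le_rpow_of_nonpos hG hle (by
          rw [neg_nonpos]
          positivity)
    _ = _ := by
        rw [← Real.rpow_mul_natCast hG.le]
        congr 2
        push_cast
        field_simp
        norm_num

theorem half_pow_mul_card_le [NeZero p] (hp : 2 ≤ p) (hd : 0 < d) {l : ℕ}
    (hl : ⌊(2 : ℝ) ^ 47 * (d : ℝ) ^ 2 * Real.log p⌋₊ ≤ l) :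
    (1 / 2 : ℝ) ^ l * Fintype.card (SL p d) ≤ 1 / 8 := by
  have hp' : (2 : ℝ) ≤ p := by exact_mod_cast hp
  have hp0 : (0 : ℝ) < p := by linarith
  have hd' : (1 : ℝ) ≤ (d : ℝ) ^ 2 := one_le_pow₀ (by exact_mod_cast hd)
  set Y : ℝ := (d : ℝ) ^ 2 * Real.log p with hY
  have hlog : Real.log 2 ≤ Real.log p := Real.log_le_log (by norm_num) hp'
  have hlog2 := Real.log_two_gt_d9
  have hY1 : Real.log 2 ≤ Y := by nlinarith
  have hl1 : (2 : ℝ) ^ 47 * Y < l + 1 := by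
    rw [hY, ← mul_assoc]
    exact (Nat.lt_floor_add_one _).trans_le (by exact_mod_cast Nat.succ_le_succ hl)
  have hexp : 3 * Real.log 2 + Y ≤ l * Real.log 2 := by nlinarith
  have hpow : 8 * (p : ℝ) ^ d ^ 2 ≤ 2 ^ l := by
    rw [← Real.log_le_log_iff (by positivity) (by positivity), Real.log_mul (by norm_num)
      (by positivity), Real.log_pow, Real.log_pow, show (8 : ℝ) = 2 ^ 3 by norm_num, Real.log_pow]
    push_cast
    exact hexp
  have hS : (Fintype.card (SL p d) : ℝ) ≤ (p : ℝ) ^ d ^ 2 := by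
    exact_mod_cast card_specialLinearGroup_le
  rw [one_div, inv_pow, inv_mul_le_iff₀ (by positivity)]
  linarith

theorem half_lt_or_cube_lt {p : ℕ} {r s b : ℝ} (hr : 0 < r) (hs : 0 < s) (hrp : 1 ≤ r ^ 32 * p)
    (hb : 8 / 9 * r * s ≤ b) : s < 2 * b ∨ s ^ 3 < ((p - 1) / 2 : ℕ) * b ^ 3 := by
  rcases Nat.lt_or_ge p 5 with hp | hp
  · left
    have hr1 : 9 / 16 < r := by
      by_contra! hle
      have h1 : r ^ 32 ≤ (9 / 16) ^ 32 := by gcongr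
      have h2 : (p : ℝ) ≤ 5 := by exact_mod_cast hp.le
      have h3 : r ^ 32 * p ≤ (9 / 16) ^ 32 * 5 := by gcongr
      norm_num at h3
      linarith
    nlinarith
  · right
    set D : ℕ := (p - 1) / 2 with hD
    have hD2 : (2 : ℝ) ≤ D := by
      have : 2 ≤ D := by omega
      exact_mod_cast this
    have hpD : (p : ℝ) ≤ (D : ℝ) ^ 3 := by
      have : (p : ℝ) ≤ 2 * D + 2 := by
        have : p ≤ 2 * D + 2 := by omega
        exact_mod_cast this
      nlinarith [sq_nonneg ((D : ℝ) - 2)]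
    have ht : 1 < D * (8 / 9 * r) ^ 3 := by
      by_contra! hle
      have h1 : (D * (8 / 9 * r) ^ 3) ^ 32 ≤ 1 := pow_le_one₀ (by positivity) hle
      have h2 : 1 ≤ r ^ 32 * (D : ℝ) ^ 3 := hrp.trans (by gcongr)
      have h3 : 1 ≤ (r ^ 32 * (D : ℝ) ^ 3) ^ 3 := one_le_pow₀ h2
      have h4 : (D * (8 / 9 * r) ^ 3) ^ 32 =
          (r ^ 32 * (D : ℝ) ^ 3) ^ 3 * ((8 / 9) ^ 96 * (D : ℝ) ^ 23) := by ring
      have h5 : (2 : ℝ) ^ 23 ≤ (D : ℝ) ^ 23 := by gcongr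
      have h6 : (1 : ℝ) < (8 / 9) ^ 96 * (D : ℝ) ^ 23 :=
        lt_of_lt_of_le (by norm_num) (mul_le_mul_of_nonneg_left h5 (by positivity))
      rw [h4] at h1
      nlinarith
    calc s ^ 3 < D * (8 / 9 * r) ^ 3 * s ^ 3 := lt_mul_of_one_lt_left (by positivity) ht
      _ = D * (8 / 9 * r * s) ^ 3 := by ring
      _ ≤ D * b ^ 3 := by gcongr

end Numerics

open Pointwise in
/-- (Lemma `linearpart`.) There is `ε > 0` depending only on `d` such that
for every prime `p`, every symmetric probability measure `μ` on `G = F_p^d ⋊ SL_d(F_p)` with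
`‖L₀^θ(μ)‖ ≤ 1/2`, and every symmetric `A ⊆ G` with `μ^{*(l)}(A) ≥ |G|^{−ε}` for some
`l ≥ ⌊2^47 d² log p⌋`, one has `θ(Π₃A) = SL_d(F_p)`. -/
theorem statement10 (d : ℕ) (hd : 0 < d) :
    ∃ ε : ℝ, 0 < ε ∧ ∀ (p : ℕ) [Fact p.Prime],
      ∀ μ : Aff p d → ℝ, IsProb μ → (∀ g : Aff p d, μ g⁻¹ = μ g) →
        L0theta μ ≤ 1 / 2 →
        ∀ A : Finset (Aff p d), (∀ a ∈ A, a⁻¹ ∈ A) →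
          (∃ l : ℕ, ⌊(2 : ℝ) ^ 47 * (d : ℝ) ^ 2 * Real.log p⌋₊ ≤ l ∧
            (Fintype.card (Aff p d) : ℝ) ^ (-ε) ≤ ∑ g ∈ A, itconv μ l g) →
          Finset.image Aff.lin (A ^ 3) = (Finset.univ : Finset (SL p d)) := by
  refine ⟨1 / (64 * (d : ℝ) ^ 2), by positivity, ?_⟩
  rintro p hp μ hμ - hgap A hA ⟨l, hl, hAl⟩
  have hsymm : ∀ σ ∈ A.image Aff.lin, σ⁻¹ ∈ A.image Aff.lin := by
    intro σ hσ
    obtain ⟨a, ha, rfl⟩ := Finset.mem_image.1 hσ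
    exact Finset.mem_image.2 ⟨a⁻¹, hA a ha, rfl⟩
  rw [image_lin_pow]
  set r : ℝ := (Fintype.card (Aff p d) : ℝ) ^ (-(1 / (64 * (d : ℝ) ^ 2)))
  have hs : (0 : ℝ) < Fintype.card (SL p d) := by exact_mod_cast Fintype.card_pos
  have hr : 0 < r := Real.rpow_pos_of_pos (by exact_mod_cast Fintype.card_pos) _
  have hlarge : 8 / 9 * r * Fintype.card (SL p d) ≤ (A.image Aff.lin).card := by
    have h1 := mul_le_mul_of_nonneg_right (hAl.trans (sum_itconv_le hμ hgap A l)) hs.le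
    have h2 := half_pow_mul_card_le hp.out.two_le hd hl
    rw [mul_assoc ((A.image Aff.lin).card : ℝ), add_mul, inv_mul_cancel₀ hs.ne'] at h1
    have h3 := mul_le_mul_of_nonneg_left h2 (Nat.cast_nonneg (α := ℝ) (A.image Aff.lin).card)
    linarith
  rcases half_lt_or_cube_lt hr hs (one_le_card_aff_rpow_pow_mul hd) hlarge with h | h
  · exact pow_three_eq_univ_of_half_lt hsymm (by exact_mod_cast h)
  · exact pow_three_eq_univ_of_lt (fun W ρ hρ => le_finrank_of_representation ρ hρ) hsymm h

end Paper
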